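/- Instantaneous γ-regret bound for the hardest model in the Example. Fix integers d, K ≥ 1, T ≥ 1, and γ ∈ (0,1] with K ≤ 20T, K ≥ 6000/γ², and T ≤ exp(d/8). Let p be any probability distribution on Π, let w̃ ∈ {−1,1}^d minimize E_{(π',π)∼p}[1(⟨w,π'⟩ ≥ d/2)] over w, and let k̃ ∈ {1,…,K} minimize E_{(π',π)∼p}[1(π = k)] over k. Then E_{(π',π)∼p}[γ·1 − f_{w̃,k̃}(π',π)] ≥ (γ/2)·√(K/(20T)). -/

import Mathlib

/-!
Averaged over a uniformly random sign vector `w`, the event `⟨w, π'⟩ ≥ d/2` has probability at most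
`exp (-d/8)` for every fixed `π'`, by Chernoff's method; averaged over a uniformly random arm `k`,
the event `π = k` has probability `1/K`. The minimizers `w̃` and `k̃` do at least as well under `p`
as these averages, so `p` rarely collects either reward of the model `(w̃, k̃)`. With
`Δ = √(K/(20T))`, its regret is at least `γΔ(1 - 1/K) - (1 - γ) exp (-d/8)`, and since
`exp (-d/8) ≤ 1/T` the lower bound on `K` makes the second term a small fraction of `γΔ`.
-/

open MeasureTheory

noncomputable section

def sgn (b : Bool) : ℝ := if b then 1 else -1

/-- Inner product of two sign vectors in `{−1,1}^d`, encoded by `Fin d → Bool`. -/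
def ip {d : ℕ} (w x : Fin d → Bool) : ℝ := ∑ i, sgn (w i) * sgn (x i)

/-- The action set `({−1,1}^d ∪ {⊥}) × [K]`; `none` plays the role of `⊥`. -/
abbrev ExAct (d K : ℕ) := Option (Fin d → Bool) × Fin K

instance (d K : ℕ) : MeasurableSpace (ExAct d K) := ⊤

/-- `h_w(π') = (2/d)·max(0, ⟨π',w⟩ − d/2)` with `h_w(⊥) = 0`. -/
def hfun {d : ℕ} (w : Fin d → Bool) : Option (Fin d → Bool) → ℝ
  | none => 0
  | some x => (2 / (d:ℝ)) * max 0 (ip x w - d/2)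

/-- Mean reward of the model `(w,k)` of the subclass `M̃`: `v_k = 1` and
`v_j = 1 − √(K/(20T))` for `j ≠ k`. -/
def fEx (d K T : ℕ) (γ : ℝ) (w : Fin d → Bool) (k : Fin K) : ExAct d K → ℝ :=
  fun a => (1 - γ) * hfun w a.1 +
    γ * (if a.2 = k then 1 else 1 - Real.sqrt ((K:ℝ) / (20 * (T:ℝ))))

/-- Indicator of the event `⟨w,π'⟩ ≥ d/2` (interpreted as `0` when `π' = ⊥`). -/
def indW (d K : ℕ) (w : Fin d → Bool) : ExAct d K → ℝ :=
  fun a => match a.1 with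
  | none => 0
  | some x => if (d:ℝ)/2 ≤ ip w x then 1 else 0

/-- Indicator of the event `π = k`. -/
def indK (d K : ℕ) (k : Fin K) : ExAct d K → ℝ :=
  fun a => if a.2 = k then 1 else 0

instance (d K : ℕ) : DiscreteMeasurableSpace (ExAct d K) := ⟨fun _ => trivial⟩

theorem integral_le_of_sum_le_of_forall_integral_le {ι α : Type*} [Fintype ι] [MeasurableSpace α]
    {μ : Measure α} [IsProbabilityMeasure μ] {f : ι → α → ℝ} {c : ℝ} {i₀ : ι}
    (hf : ∀ i, Integrable (f i) μ) (hsum : ∀ᵐ a ∂μ, ∑ i, f i a ≤ Fintype.card ι * c)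
    (hmin : ∀ i, ∫ a, f i₀ a ∂μ ≤ ∫ a, f i a ∂μ) :
    ∫ a, f i₀ a ∂μ ≤ c := by
  have card_pos : (0 : ℝ) < Fintype.card ι := by
    exact_mod_cast Fintype.card_pos_iff.mpr ⟨i₀⟩
  refine le_of_mul_le_mul_left ?_ card_pos
  calc Fintype.card ι * ∫ a, f i₀ a ∂μ
      = ∑ _i : ι, ∫ a, f i₀ a ∂μ := by simp
    _ ≤ ∑ i, ∫ a, f i a ∂μ := Finset.sum_le_sum fun i _ => hmin i
    _ = ∫ a, ∑ i, f i a ∂μ := (integral_finsetSum _ fun i _ => hf i).symm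
    _ ≤ ∫ _a, Fintype.card ι * c ∂μ :=
        integral_mono_ae (integrable_finsetSum _ fun i _ => hf i) (integrable_const _) hsum
    _ = Fintype.card ι * c := by simp

section SignSums

variable {ι : Type*} [Fintype ι] [DecidableEq ι]

theorem sum_exp_sum_sgn_mul (a : ι → ℝ) :
    ∑ w : ι → Bool, Real.exp (∑ i, sgn (w i) * a i) = ∏ i, 2 * Real.cosh (a i) := by
  have sum_sign (t : ℝ) : ∑ b : Bool, Real.exp (sgn b * t) = 2 * Real.cosh t := by
    simp [sgn, Real.cosh_eq, mul_div_cancel₀]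
  simp_rw [Real.exp_sum, ← sum_sign, Fintype.prod_sum]

theorem sum_exp_sum_sgn_mul_le (a : ι → ℝ) :
    ∑ w : ι → Bool, Real.exp (∑ i, sgn (w i) * a i) ≤
      2 ^ Fintype.card ι * Real.exp ((∑ i, a i ^ 2) / 2) := by
  calc ∑ w : ι → Bool, Real.exp (∑ i, sgn (w i) * a i)
      = ∏ i, 2 * Real.cosh (a i) := sum_exp_sum_sgn_mul a
    _ ≤ ∏ i, 2 * Real.exp (a i ^ 2 / 2) := by
        gcongr with i
        exact Real.cosh_le_exp_half_sq (a i)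
    _ = 2 ^ Fintype.card ι * Real.exp ((∑ i, a i ^ 2) / 2) := by
        rw [Finset.prod_mul_distrib, ← Real.exp_sum, Finset.sum_div]
        simp

theorem card_le_sum_sgn_mul_le (a : ι → ℝ) (r : ℝ) {t : ℝ} (ht : 0 ≤ t) :
    (Finset.card {w : ι → Bool | r ≤ ∑ i, sgn (w i) * a i} : ℝ) ≤
      2 ^ Fintype.card ι * Real.exp (t ^ 2 * (∑ i, a i ^ 2) / 2 - t * r) := by
  have indicator_le (w : ι → Bool) :
      (if r ≤ ∑ i, sgn (w i) * a i then 1 else 0 : ℝ) ≤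
        Real.exp (∑ i, sgn (w i) * (t * a i)) * Real.exp (-(t * r)) := by
    have sum_eq : ∑ i, sgn (w i) * (t * a i) = t * ∑ i, sgn (w i) * a i := by
      rw [Finset.mul_sum]
      exact Finset.sum_congr rfl fun i _ => mul_left_comm _ _ _
    rw [← Real.exp_add, sum_eq]
    split_ifs with h
    · exact Real.one_le_exp (by linarith [mul_le_mul_of_nonneg_left h ht])
    · positivity
  calc (Finset.card {w : ι → Bool | r ≤ ∑ i, sgn (w i) * a i} : ℝ)
      = ∑ w : ι → Bool, if r ≤ ∑ i, sgn (w i) * a i then 1 else 0 := by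
        rw [Finset.sum_boole]
    _ ≤ (∑ w : ι → Bool, Real.exp (∑ i, sgn (w i) * (t * a i))) * Real.exp (-(t * r)) := by
        rw [Finset.sum_mul]
        exact Finset.sum_le_sum fun w _ => indicator_le w
    _ ≤ 2 ^ Fintype.card ι * Real.exp ((∑ i, (t * a i) ^ 2) / 2) * Real.exp (-(t * r)) := by
        gcongr
        exact sum_exp_sum_sgn_mul_le _
    _ = 2 ^ Fintype.card ι * Real.exp (t ^ 2 * (∑ i, a i ^ 2) / 2 - t * r) := by
        simp_rw [mul_pow]
        rw [← Finset.mul_sum, mul_assoc, ← Real.exp_add, ← sub_eq_add_neg]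

end SignSums

theorem ip_comm {d : ℕ} (w x : Fin d → Bool) : ip w x = ip x w :=
  Finset.sum_congr rfl fun _ _ => mul_comm _ _

theorem ip_le_dim {d : ℕ} (w x : Fin d → Bool) : ip w x ≤ d := by
  have sgn_mul_sgn_le_one (b c : Bool) : sgn b * sgn c ≤ 1 := by
    cases b <;> cases c <;> norm_num [sgn]
  calc ip w x ≤ ∑ _i : Fin d, (1 : ℝ) := Finset.sum_le_sum fun _ _ => sgn_mul_sgn_le_one _ _
    _ = d := by simp

theorem card_half_dim_le_ip_le {d : ℕ} (x : Fin d → Bool) :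
    (Finset.card {w : Fin d → Bool | (d : ℝ) / 2 ≤ ip w x} : ℝ) ≤
      2 ^ d * Real.exp (-(d : ℝ) / 8) := by
  have sgn_sq (b : Bool) : sgn b ^ 2 = 1 := by cases b <;> simp [sgn]
  -- `t = 1/2` minimizes the exponent `t ^ 2 * d / 2 - t * (d / 2)`.
  calc (Finset.card {w : Fin d → Bool | (d : ℝ) / 2 ≤ ip w x} : ℝ)
      ≤ 2 ^ Fintype.card (Fin d) *
          Real.exp ((1 / 2) ^ 2 * (∑ i, sgn (x i) ^ 2) / 2 - 1 / 2 * (d / 2)) :=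
        card_le_sum_sgn_mul_le (fun i => sgn (x i)) _ (by norm_num)
    _ = 2 ^ d * Real.exp (-(d : ℝ) / 8) := by
        simp only [sgn_sq, Finset.sum_const, Finset.card_univ, Fintype.card_fin, nsmul_eq_mul]
        ring_nf

section Minimizers

variable {d K : ℕ}

theorem sum_indW_le (a : ExAct d K) :
    ∑ w : Fin d → Bool, indW d K w a ≤ 2 ^ d * Real.exp (-(d : ℝ) / 8) := by
  rcases a with ⟨_ | x, k⟩
  · simp only [indW, Finset.sum_const_zero]
    positivity
  · simpa only [indW, Finset.sum_boole] using card_half_dim_le_ip_le x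

theorem sum_indK (a : ExAct d K) : ∑ k, indK d K k a = 1 := by
  simp [indK]

variable (p : Measure (ExAct d K)) [IsProbabilityMeasure p]

theorem integral_indW_le_exp_of_forall_le {w₀ : Fin d → Bool}
    (hmin : ∀ w, ∫ a, indW d K w₀ a ∂p ≤ ∫ a, indW d K w a ∂p) :
    ∫ a, indW d K w₀ a ∂p ≤ Real.exp (-(d : ℝ) / 8) :=
  integral_le_of_sum_le_of_forall_integral_le (fun _ => .of_finite)
    (.of_forall fun a => by simpa using sum_indW_le a) hmin

theorem integral_indK_le_inv_of_forall_le {k₀ : Fin K}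
    (hmin : ∀ k, ∫ a, indK d K k₀ a ∂p ≤ ∫ a, indK d K k a ∂p) :
    ∫ a, indK d K k₀ a ∂p ≤ (K : ℝ)⁻¹ := by
  have hK : (K : ℝ) ≠ 0 := by exact_mod_cast k₀.pos.ne'
  refine integral_le_of_sum_le_of_forall_integral_le (fun _ => .of_finite)
    (.of_forall fun a => ?_) hmin
  rw [sum_indK, Fintype.card_fin, mul_inv_cancel₀ hK]

end Minimizers

theorem hfun_le_indW {d K : ℕ} (hd : 1 ≤ d) (w : Fin d → Bool) (a : ExAct d K) :
    hfun w a.1 ≤ indW d K w a := by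
  have hd' : (0 : ℝ) < d := by exact_mod_cast hd
  rcases a with ⟨_ | x, k⟩
  · simp [indW, hfun]
  · simp only [indW, hfun, ip_comm w x]
    split_ifs with h
    · rw [max_eq_right (sub_nonneg.2 h), div_mul_eq_mul_div, div_le_one hd']
      linarith [ip_le_dim x w]
    · rw [max_eq_left (by linarith), mul_zero]

theorem sub_fEx_eq (d K T : ℕ) (γ : ℝ) (w : Fin d → Bool) (k : Fin K) (a : ExAct d K) :
    γ * 1 - fEx d K T γ w k a =
      γ * √(K / (20 * T)) * (1 - indK d K k a) - (1 - γ) * hfun w a.1 := by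
  simp only [fEx, indK]
  split_ifs <;> ring

theorem le_integral_sub_fEx {d K : ℕ} (hd : 1 ≤ d) (T : ℕ) {γ : ℝ} (hγ : γ ≤ 1)
    (p : Measure (ExAct d K)) [IsProbabilityMeasure p] (w : Fin d → Bool) (k : Fin K) :
    γ * √(K / (20 * T)) * (1 - ∫ a, indK d K k a ∂p) - (1 - γ) * ∫ a, indW d K w a ∂p ≤
      ∫ a, (γ * 1 - fEx d K T γ w k a) ∂p := by
  calc γ * √(K / (20 * T)) * (1 - ∫ a, indK d K k a ∂p) - (1 - γ) * ∫ a, indW d K w a ∂p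
      = ∫ a, (γ * √(K / (20 * T)) * (1 - indK d K k a) - (1 - γ) * indW d K w a) ∂p := by
        rw [integral_sub .of_finite .of_finite, integral_const_mul, integral_const_mul,
          integral_sub .of_finite .of_finite]
        simp
    _ ≤ ∫ a, (γ * 1 - fEx d K T γ w k a) ∂p := by
        refine integral_mono .of_finite .of_finite fun a => ?_
        rw [sub_fEx_eq]
        have := sub_nonneg.2 hγ
        gcongr
        exact hfun_le_indW hd w a

theorem div_le_mul_sqrt_div {c K T γ : ℝ} (hT : 1 ≤ T) (hγ : 0 < γ)
    (hK : 20 * c ^ 2 / γ ^ 2 ≤ K) : c / T ≤ γ * √(K / (20 * T)) := by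
  have : 0 < T := by linarith
  have sq_le : (c / T / γ) ^ 2 ≤ K / (20 * T) := by
    calc (c / T / γ) ^ 2 = 20 * c ^ 2 / γ ^ 2 / (20 * T) / T := by field_simp
      _ ≤ 20 * c ^ 2 / γ ^ 2 / (20 * T) := div_le_self (by positivity) hT
      _ ≤ K / (20 * T) := by gcongr
  exact (div_le_iff₀' hγ).1 (Real.le_sqrt_of_sq_le sq_le)

theorem example_instantaneous_regret_bound_general {d K T : ℕ} (hd : 1 ≤ d) (hT : 1 ≤ T)
    {γ : ℝ} (hγ : γ ∈ Set.Ioc (0 : ℝ) 1) (hKγ : 320 / γ ^ 2 ≤ (K : ℝ))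
    (hTd : (T : ℝ) ≤ Real.exp (d / 8))
    (p : Measure (ExAct d K)) [IsProbabilityMeasure p] {wt : Fin d → Bool}
    (hwt : ∀ w : Fin d → Bool, ∫ a, indW d K wt a ∂p ≤ ∫ a, indW d K w a ∂p) {kt : Fin K}
    (hkt : ∀ k : Fin K, ∫ a, indK d K kt a ∂p ≤ ∫ a, indK d K k a ∂p) :
    γ / 2 * √(K / (20 * T)) ≤ ∫ a, (γ * 1 - fEx d K T γ wt kt a) ∂p := by
  obtain ⟨hγ₀, hγ₁⟩ := hγ
  have hT' : (1 : ℝ) ≤ T := by exact_mod_cast hT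
  have hK : (4 : ℝ) ≤ K := by
    have : 320 ≤ 320 / γ ^ 2 := le_div_self (by norm_num) (by positivity) (pow_le_one₀ hγ₀.le hγ₁)
    linarith
  have indK_le : ∫ a, indK d K kt a ∂p ≤ 1 / 4 :=
    (integral_indK_le_inv_of_forall_le p hkt).trans (by simpa using inv_anti₀ (by norm_num) hK)
  have gap_ge : 4 / (T : ℝ) ≤ γ * √(K / (20 * T)) :=
    div_le_mul_sqrt_div hT' hγ₀ (by norm_num [hKγ])
  have indW_le : ∫ a, indW d K wt a ∂p ≤ γ * √(K / (20 * T)) / 4 := by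
    calc ∫ a, indW d K wt a ∂p ≤ Real.exp (-(d : ℝ) / 8) := integral_indW_le_exp_of_forall_le p hwt
      _ ≤ (T : ℝ)⁻¹ := by rw [neg_div, Real.exp_neg]; gcongr
      _ ≤ γ * √(K / (20 * T)) / 4 := by linarith [div_eq_mul_inv 4 (T : ℝ)]
  calc γ / 2 * √(K / (20 * T))
      = γ * √(K / (20 * T)) * (1 - 1 / 4) - 1 * (γ * √(K / (20 * T)) / 4) := by ring
    _ ≤ γ * √(K / (20 * T)) * (1 - ∫ a, indK d K kt a ∂p) - (1 - γ) * ∫ a, indW d K wt a ∂p := by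
        refine sub_le_sub (by gcongr) ?_
        exact mul_le_mul_of_nonneg (by linarith) indW_le (by linarith) (by positivity)
    _ ≤ ∫ a, (γ * 1 - fEx d K T γ wt kt a) ∂p := le_integral_sub_fEx hd T hγ₁ p wt kt

/-- **Instantaneous γ-regret bound for the hardest model in the Example.** If `w̃`
minimizes `E_p[1(⟨w,π'⟩ ≥ d/2)]` and `k̃` minimizes `E_p[1(π = k)]`, then
`E_p[γ·1 − f_{w̃,k̃}] ≥ (γ/2)√(K/(20T))`. -/
theorem example_instantaneous_regret_bound (d K T : ℕ)
    (hd : 1 ≤ d) (hK : 1 ≤ K) (hT : 1 ≤ T)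
    (hKT : (K:ℝ) ≤ 20 * (T:ℝ))
    (γ : ℝ) (hγ : γ ∈ Set.Ioc (0:ℝ) 1)
    (hKγ : 6000 / γ^2 ≤ (K:ℝ))
    (hTd : (T:ℝ) ≤ Real.exp ((d:ℝ)/8))
    (p : Measure (ExAct d K)) (hp : IsProbabilityMeasure p)
    (wt : Fin d → Bool)
    (hwt : ∀ w : Fin d → Bool, ∫ a, indW d K wt a ∂p ≤ ∫ a, indW d K w a ∂p)
    (kt : Fin K)
    (hkt : ∀ k : Fin K, ∫ a, indK d K kt a ∂p ≤ ∫ a, indK d K k a ∂p) :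
    (γ/2) * Real.sqrt ((K:ℝ) / (20 * (T:ℝ))) ≤
      ∫ a, (γ * 1 - fEx d K T γ wt kt a) ∂p := by
  exact example_instantaneous_regret_bound_general hd hT hγ
    ((by gcongr; norm_num : 320 / γ ^ 2 ≤ 6000 / γ ^ 2).trans hKγ) hTd p hwt hkt

end
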